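/- arXiv:1507.08527 — 7 statements merged into one kernel-verified Lean document; each statement's English description precedes it below -/
import Mathlib

section
/- The subset C = {(a,b,c) in R^3 : a >= 0, b >= 0, c >= 0, b >= 2c, and 2a + b >= 4c} equals the set of all linear combinations with nonnegative real coefficients of the four vectors (1,0,0), (0,1,0), (1,2,1), (0,4,1). -/
/-- The effective movable cone of the blowup of `ℙ¹ × ℙ³`:
`{(a,b,c) : a ≥ 0, b ≥ 0, c ≥ 0, b ≥ 2c, 2a + b ≥ 4c}` is the cone generated by
`(1,0,0)`, `(0,1,0)`, `(1,2,1)`, `(0,4,1)`. -/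
theorem movable_cone_P1xP3 :
    {p : ℝ × ℝ × ℝ | 0 ≤ p.1 ∧ 0 ≤ p.2.1 ∧ 0 ≤ p.2.2 ∧ 2 * p.2.2 ≤ p.2.1 ∧
        4 * p.2.2 ≤ 2 * p.1 + p.2.1} =
    {p : ℝ × ℝ × ℝ | ∃ c₁ c₂ c₃ c₄ : ℝ, 0 ≤ c₁ ∧ 0 ≤ c₂ ∧ 0 ≤ c₃ ∧ 0 ≤ c₄ ∧
        p = c₁ • ((1 : ℝ), (0 : ℝ), (0 : ℝ)) + c₂ • ((0 : ℝ), (1 : ℝ), (0 : ℝ)) +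
            c₃ • ((1 : ℝ), (2 : ℝ), (1 : ℝ)) + c₄ • ((0 : ℝ), (4 : ℝ), (1 : ℝ))} := by
  ext ⟨a, b, c⟩
  simp only [Set.mem_ofPred_eq, Prod.smul_mk, Prod.mk_add_mk, Prod.mk.injEq, smul_eq_mul]
  constructor
  · rintro ⟨ha, -, hc, hbc, habc⟩
    -- The coordinates force `c₄ = c - c₃`, `c₁ = a - c₃` and `c₂ = b - 4c + 2c₃`. The largest `c₃`
    -- keeping `c₁, c₄ ≥ 0` is `min a c`; then `c₂ ≥ 0` is `4c ≤ 2a + b` or `2c ≤ b`.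
    refine ⟨a - min a c, b - 4 * c + 2 * min a c, min a c, c - min a c,
      sub_nonneg.2 (min_le_left a c), ?_, le_min ha hc, sub_nonneg.2 (min_le_right a c),
      by ring, by ring, by ring⟩
    rcases min_choice a c with h | h <;> rw [h] <;> linarith
  · rintro ⟨c₁, c₂, c₃, c₄, h₁, h₂, h₃, h₄, rfl, rfl, rfl⟩
    refine ⟨?_, ?_, ?_, ?_, ?_⟩ <;> linarith
end

section
/- The subset C = {(a,b,c) in R^3 : a >= 0, b >= 0, c >= 0, a >= b, b >= c, and 2a >= b + 3c} equals the set of all linear combinations with nonnegative real coefficients of the four vectors (1,0,0), (1,1,0), (2,1,1), (3,3,1). -/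
/-- The effective movable cone of the blowup of the cone over a quadric threefold:
`{(a,b,c) : a ≥ 0, b ≥ 0, c ≥ 0, a ≥ b, b ≥ c, 2a ≥ b + 3c}` is the cone generated by
`(1,0,0)`, `(1,1,0)`, `(2,1,1)`, `(3,3,1)`. -/
theorem movable_cone_quadric_cone :
    {p : ℝ × ℝ × ℝ | 0 ≤ p.1 ∧ 0 ≤ p.2.1 ∧ 0 ≤ p.2.2 ∧ p.2.1 ≤ p.1 ∧ p.2.2 ≤ p.2.1 ∧
        p.2.1 + 3 * p.2.2 ≤ 2 * p.1} =
    {p : ℝ × ℝ × ℝ | ∃ c₁ c₂ c₃ c₄ : ℝ, 0 ≤ c₁ ∧ 0 ≤ c₂ ∧ 0 ≤ c₃ ∧ 0 ≤ c₄ ∧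
        p = c₁ • ((1 : ℝ), (0 : ℝ), (0 : ℝ)) + c₂ • ((1 : ℝ), (1 : ℝ), (0 : ℝ)) +
            c₃ • ((2 : ℝ), (1 : ℝ), (1 : ℝ)) + c₄ • ((3 : ℝ), (3 : ℝ), (1 : ℝ))} := by
  ext ⟨a, b, c⟩
  simp only [Set.mem_ofPred_eq, Prod.smul_mk, Prod.mk_add_mk, Prod.mk.injEq, smul_eq_mul]
  constructor
  · rintro ⟨-, -, hc, hab, hbc, h⟩
    -- The plane `b = 3c` through `(1,0,0)` and `(3,3,1)` cuts the cone into two simplicial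
    -- cones; on each piece the coefficients are determined by solving a linear system.
    rcases le_total b (3 * c) with hb | hb
    · refine ⟨a - (b + 3 * c) / 2, 0, (3 * c - b) / 2, (b - c) / 2, ?_, le_rfl, ?_, ?_,
        ?_, ?_, ?_⟩ <;> linarith
    · refine ⟨a - b, b - 3 * c, 0, c, ?_, ?_, le_rfl, hc, ?_, ?_, ?_⟩ <;> linarith
  · rintro ⟨c₁, c₂, c₃, c₄, h₁, h₂, h₃, h₄, rfl, rfl, rfl⟩
    refine ⟨?_, ?_, ?_, ?_, ?_, ?_⟩ <;> linarith
end

section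
/- Let G = [[2,4],[4,2]] and M = [[15,4],[-4,-1]], both 2x2 integer matrices. Then M^T * G * M = G, and M has infinite order: M^n is not the identity matrix for every integer n >= 1. -/
open Matrix

/-- The matrix `M = [[15,4],[-4,-1]]` is an isometry of infinite order of the lattice with
Gram matrix `G = [[2,4],[4,2]]`. -/
theorem isometry_infinite_order_double_cover :
    let G : Matrix (Fin 2) (Fin 2) ℤ := !![2, 4; 4, 2]
    let M : Matrix (Fin 2) (Fin 2) ℤ := !![15, 4; -4, -1]
    Mᵀ * G * M = G ∧ ∀ n : ℕ, 1 ≤ n → M ^ n ≠ 1 := by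
  intro G M
  refine ⟨by decide, fun n hn h => ?_⟩
  -- `M` maps the cone `{(a, c) | c < 0 < a + c}` into itself, and the first column of `M` lies in
  -- it; the first column `(1, 0)` of the identity does not.
  have key : (M ^ n) 1 0 < 0 ∧ 0 < (M ^ n) 0 0 + (M ^ n) 1 0 := by
    clear h
    induction n, hn using Nat.le_induction with
    | base => simp [M]
    | succ k _ ih =>
      have h0 : (M ^ (k + 1)) 0 0 = 15 * (M ^ k) 0 0 + 4 * (M ^ k) 1 0 := by
        rw [pow_succ', Matrix.mul_apply, Fin.sum_univ_two]; simp [M]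
      have h1 : (M ^ (k + 1)) 1 0 = -4 * (M ^ k) 0 0 - (M ^ k) 1 0 := by
        rw [pow_succ', Matrix.mul_apply, Fin.sum_univ_two]; simp [M]; ring
      rw [h0, h1]
      omega
  rw [h] at key
  simp at key
end

section
/- The set of 2x2 integer matrices M satisfying M^T * G * M = G, where G = [[2,4],[4,2]], is infinite. -/
open Matrix

/-!
The isometry `A = [[4,1],[-1,0]]` is the product of the reflection `[[1,4],[0,-1]]` and the swap of
the two basis vectors. It has infinite order because the top left entry of `A ^ n` is strictly
increasing in `n`, so its powers are infinitely many elements of the orthogonal group.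
-/

/-- Bounds on the top row of `A ^ n` that propagate along `A ^ (n + 1) = A ^ n * A`, whose top row
is `(4a - b, a)` when that of `A ^ n` is `(a, b)`. -/
lemma top_row_pow_bounds (n : ℕ) :
    0 ≤ (!![(4 : ℤ), 1; -1, 0] ^ n) 0 1 ∧
      (!![(4 : ℤ), 1; -1, 0] ^ n) 0 1 < (!![(4 : ℤ), 1; -1, 0] ^ n) 0 0 := by
  induction n with
  | zero => simp
  | succ n ih =>
    rw [pow_succ]
    simp only [Matrix.mul_apply, Fin.sum_univ_two, Matrix.of_apply, Matrix.cons_val', Matrix.cons_val_zero,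
      Matrix.cons_val_one, Matrix.cons_val_fin_one]
    constructor <;> linarith [ih.1, ih.2]

/-- The orthogonal group of the lattice with Gram matrix `G = [[2,4],[4,2]]` is infinite. -/
theorem orthogonal_group_infinite_double_cover :
    {M : Matrix (Fin 2) (Fin 2) ℤ | Mᵀ * !![(2 : ℤ), 4; 4, 2] * M = !![(2 : ℤ), 4; 4, 2]}.Infinite := by
  have hmono : StrictMono fun n : ℕ => (!![(4 : ℤ), 1; -1, 0] ^ n) 0 0 := by
    refine strictMono_nat_of_lt_succ fun n => ?_
    have h := top_row_pow_bounds n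
    rw [pow_succ]
    simp only [Matrix.mul_apply, Fin.sum_univ_two, Matrix.of_apply, Matrix.cons_val', Matrix.cons_val_zero,
      Matrix.cons_val_one, Matrix.cons_val_fin_one]
    linarith [h.1, h.2]
  refine Set.infinite_of_injective_forall_mem (f := fun n : ℕ => !![(4 : ℤ), 1; -1, 0] ^ n)
    (fun m n h => hmono.injective (congrFun (congrFun h 0) 0)) fun n => ?_
  rw [Set.mem_setOf_eq]
  induction n with
  | zero => simp
  | succ n ih =>
    have hA : !![(4 : ℤ), 1; -1, 0]ᵀ * !![(2 : ℤ), 4; 4, 2] * !![(4 : ℤ), 1; -1, 0]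
        = !![(2 : ℤ), 4; 4, 2] := by decide
    calc _ = !![(4 : ℤ), 1; -1, 0]ᵀ * ((!![(4 : ℤ), 1; -1, 0] ^ n)ᵀ * !![(2 : ℤ), 4; 4, 2]
              * !![(4 : ℤ), 1; -1, 0] ^ n) * !![(4 : ℤ), 1; -1, 0] := by
            rw [pow_succ, Matrix.transpose_mul]
            simp only [Matrix.mul_assoc]
      _ = _ := by rw [ih, hA]
end

section
/- Let G = [[4,6],[6,4]] and M = [[21,8],[-8,-3]], both 2x2 integer matrices. Then M^T * G * M = G, and M has infinite order: M^n is not the identity matrix for every integer n >= 1. -/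
/-!
The isometry identity is a direct computation. For infinite order, the first column of `M ^ n`
lies, for `n ≥ 1`, in a cone on which the lower-left entry is negative
(`first_column_pow_mem_cone`), whereas that entry of the identity matrix is `0`.
-/

open Matrix

/-- The first column `(a, c)` of `M ^ (n + 1)` stays in the cone `a > 0`, `c < 0`, `a + 2c > 0`,
which multiplication by `M` maps into itself. -/
lemma first_column_pow_mem_cone (n : ℕ) :
    0 < ((!![21, 8; -8, -3] : Matrix (Fin 2) (Fin 2) ℤ) ^ (n + 1)) 0 0 ∧
    ((!![21, 8; -8, -3] : Matrix (Fin 2) (Fin 2) ℤ) ^ (n + 1)) 1 0 < 0 ∧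
    0 < ((!![21, 8; -8, -3] : Matrix (Fin 2) (Fin 2) ℤ) ^ (n + 1)) 0 0 +
      2 * ((!![21, 8; -8, -3] : Matrix (Fin 2) (Fin 2) ℤ) ^ (n + 1)) 1 0 := by
  induction n with
  | zero => simp
  | succ k ih =>
    rw [pow_succ' _ (k + 1)]
    generalize (!![21, 8; -8, -3] : Matrix (Fin 2) (Fin 2) ℤ) ^ (k + 1) = A at ih ⊢
    simp only [Matrix.mul_apply, Fin.sum_univ_two, Matrix.of_apply, Matrix.cons_val_zero,
      Matrix.cons_val_one, Matrix.cons_val_fin_one]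
    omega

/-- The matrix `M = [[21,8],[-8,-3]]` is an isometry of infinite order of the lattice with
Gram matrix `G = [[4,6],[6,4]]`. -/
theorem isometry_infinite_order_P3xP3 :
    let G : Matrix (Fin 2) (Fin 2) ℤ := !![4, 6; 6, 4]
    let M : Matrix (Fin 2) (Fin 2) ℤ := !![21, 8; -8, -3]
    Mᵀ * G * M = G ∧ ∀ n : ℕ, 1 ≤ n → M ^ n ≠ 1 := by
  intro G M
  refine ⟨by decide, fun n hn h => ?_⟩
  obtain ⟨k, rfl⟩ := Nat.exists_eq_add_of_le' hn
  have hc := (first_column_pow_mem_cone k).2.1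
  change (M ^ (k + 1)) 1 0 < 0 at hc
  rw [h] at hc
  simp at hc
end

section
/- Let G be the 4x4 integer matrix with all diagonal entries 0 and all off-diagonal entries 2, and let M be the 4x4 integer matrix with rows (1,2,6,4), (0,-1,-2,-2), (0,2,3,2), (0,0,0,1). Then M^T * G * M = G, and M has infinite order: M^n is not the identity matrix for every integer n >= 1. -/
open Matrix

/-!
The isometry identity is a finite computation. For infinite order, the middle `2 × 2` block of `M`
is `1 + N` with `N = !![-2, -2; 2, 2]` and `N ^ 2 = 0`, so the corresponding block of `M ^ n` is
`1 + n • N`. In particular the second column of `M ^ n` has the form `(*, 1 - 2n, 2n, 0)`, and its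
third entry `2n` is nonzero for `n ≥ 1`.
-/

/-- The translation automorphism `τ¹₃₂` acts on the Picard lattice of the generic K3 fiber
(Gram matrix: 0 on the diagonal, 2 off the diagonal) as an isometry of infinite order. -/
theorem translation_isometry_infinite_order :
    let G : Matrix (Fin 4) (Fin 4) ℤ := Matrix.of fun i j => if i = j then 0 else 2
    let M : Matrix (Fin 4) (Fin 4) ℤ := !![1, 2, 6, 4; 0, -1, -2, -2; 0, 2, 3, 2; 0, 0, 0, 1]
    Mᵀ * G * M = G ∧ ∀ n : ℕ, 1 ≤ n → M ^ n ≠ 1 := by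
  intro G M
  refine ⟨by decide, fun n hn h => ?_⟩
  have key : ∀ k : ℕ, (M ^ k) 1 1 = 1 - 2 * (k : ℤ) ∧ (M ^ k) 2 1 = 2 * (k : ℤ) ∧
      (M ^ k) 3 1 = 0 := by
    intro k
    induction k with
    | zero => simp
    | succ k ih =>
      obtain ⟨h1, h2, h3⟩ := ih
      simp only [pow_succ', Matrix.mul_apply, Fin.sum_univ_four, h1, h2, h3]
      push_cast
      refine ⟨?_, ?_, ?_⟩ <;> simp [M] <;> ring
  have h2 := (key n).2.1
  rw [h] at h2
  simp at h2
  omega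
end

section
/- The set of 2x2 integer matrices M satisfying M^T * G * M = G, where G = [[4,6],[6,4]], is infinite. -/
open Matrix

/-!
The form of `G` is `4 (x² + 3xy + y²)`. Composing the isometries `(x, y) ↦ (y, x)` and
`(x, y) ↦ (x, -3x - y)`, and changing sign, gives the isometry `A = [[3, 1], [-1, 0]]`.
It has infinite order because the upper left entries of its powers strictly increase.
-/

/-- Isometries of any Gram matrix are closed under powers. -/
lemma isometry_pow {G A : Matrix (Fin 2) (Fin 2) ℤ} (h : Aᵀ * G * A = G) (n : ℕ) :
    (A ^ n)ᵀ * G * A ^ n = G := by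
  induction n with
  | zero => simp
  | succ k ih =>
    calc (A ^ (k + 1))ᵀ * G * A ^ (k + 1) = Aᵀ * ((A ^ k)ᵀ * G * A ^ k) * A := by
          rw [pow_succ, transpose_mul]; simp only [Matrix.mul_assoc]
      _ = G := by rw [ih, h]

lemma pow_succ_entries (n : ℕ) :
    (!![(3 : ℤ), 1; -1, 0] ^ (n + 1)) 0 0 =
      3 * (!![(3 : ℤ), 1; -1, 0] ^ n) 0 0 - (!![(3 : ℤ), 1; -1, 0] ^ n) 0 1 ∧
    (!![(3 : ℤ), 1; -1, 0] ^ (n + 1)) 0 1 = (!![(3 : ℤ), 1; -1, 0] ^ n) 0 0 := by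
  rw [pow_succ]
  constructor <;> simp [Matrix.mul_apply, Fin.sum_univ_two]
  ring

/-- The invariant on the first row that makes the upper left entries of the powers increase. -/
lemma pow_entries_bounds (n : ℕ) :
    0 ≤ (!![(3 : ℤ), 1; -1, 0] ^ n) 0 1 ∧
      (!![(3 : ℤ), 1; -1, 0] ^ n) 0 1 < (!![(3 : ℤ), 1; -1, 0] ^ n) 0 0 := by
  induction n with
  | zero => simp
  | succ k ih =>
    obtain ⟨h0, h1⟩ := pow_succ_entries k
    rw [h0, h1]
    omega

/-- The orthogonal group of the lattice with Gram matrix `G = [[4,6],[6,4]]` is infinite. -/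
theorem orthogonal_group_infinite_P3xP3 :
    {M : Matrix (Fin 2) (Fin 2) ℤ | Mᵀ * !![(4 : ℤ), 6; 6, 4] * M = !![(4 : ℤ), 6; 6, 4]}.Infinite := by
  have hmono : StrictMono fun n : ℕ => (!![(3 : ℤ), 1; -1, 0] ^ n) 0 0 := by
    refine strictMono_nat_of_lt_succ fun n => ?_
    have h0 := (pow_succ_entries n).1
    have hb := pow_entries_bounds n
    omega
  refine Set.infinite_of_injective_forall_mem (f := fun n : ℕ => !![(3 : ℤ), 1; -1, 0] ^ n)
    (fun m n h => hmono.injective (congrFun (congrFun h 0) 0)) fun n => isometry_pow ?_ n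
  decide
end
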